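/- For p ≥ 3, n ≥ 3 and b ≥ 1, the shrinkage function φ(w) defined by φ(w) = w·[∫₀¹ λ^{p/2−1}(log(1/λ))^b (1+wλ)^{−(p+n)/2−1} dλ]/[∫₀¹ λ^{p/2−2}(log(1/λ))^b (1+wλ)^{−(p+n)/2−1} dλ] satisfies lim_{w→∞} (log w)·((p−2)/(n+2) − φ(w)) = 2b(p+n)/(n+2)². -/

import Mathlib

open MeasureTheory Filter

/-!
Write `J a β k w = ∫₀¹ l ^ (a - 1) (log (1 / l)) ^ β (1 + w l) ^ (-k) dl`, so that
`φ w = w J (a + 1) b (K + 1) w / J a b (K + 1) w` with `a = p / 2 - 1` and `K = (p + n) / 2`.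
Integrating the derivative of `l ^ a (log (1 / l)) ^ b (1 + w l) ^ (-K)` over `(0, 1)` gives the
exact identity `a / (K - a) - φ w = b / (K - a) * (J a (b - 1) K w / J a b (K + 1) w)`. The
substitution `t = w l` and dominated convergence show
`J a β k w ∼ w ^ (-a) (log w) ^ β ∫₀^∞ t ^ (a - 1) (1 + t) ^ (-k) dt`; hence the ratio on the right
is asymptotic to a quotient of two Beta integrals, namely `K / (K - a)`, divided by `log w`.
-/

section

open Set Real Asymptotics
open scoped Topology

/-- The integral `∫₀^∞ t ^ (a - 1) (1 + t) ^ (-k) dt`, equal to the Beta function `B(a, k - a)`: the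
normalizing constant of the Beta prime distribution. It converges for `0 < a < k`. -/
noncomputable def betaPrimeIntegral (a k : ℝ) : ℝ :=
  ∫ t in Ioi 0, t ^ (a - 1) * (1 + t) ^ (-k)

/-- The integrand `l ^ (a - 1) (log (1 / l)) ^ β (1 + w l) ^ (-k)` of `logBetaIntegral`. -/
noncomputable def logBetaIntegrand (a β k w l : ℝ) : ℝ :=
  l ^ (a - 1) * log (1 / l) ^ β * (1 + w * l) ^ (-k)

/-- The log-weighted Beta integral; the shrinkage function is `w` times the quotient of its values
at `a + 1` and `a`. The exponent of `l` is `a - 1`, as in the Mellin transform, so that convergence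
at `0` means `0 < a`; convergence at `1` means `-1 < β`. -/
noncomputable def logBetaIntegral (a β k w : ℝ) : ℝ :=
  ∫ l in Ioo 0 1, logBetaIntegrand a β k w l

variable {a b β k K r w : ℝ}

lemma isBigO_one_add_abs_log_rpow_atTop (hβ : 0 ≤ β) (hr : 0 < r) :
    (fun t : ℝ => (1 + |log t|) ^ β) =O[atTop] (· ^ r) := by
  have one_add_abs_log_isBigO : (fun t : ℝ => 1 + |log t|) =O[atTop] log :=
    isLittleO_const_log_atTop.isBigO.add (isBigO_refl log atTop).abs_left
  exact (one_add_abs_log_isBigO.rpow hβ (tendsto_log_atTop.eventually_ge_atTop 0)).trans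
    (isLittleO_log_rpow_rpow_atTop β hr).isBigO

lemma isBigO_one_add_abs_log_rpow_nhdsGT_zero (hβ : 0 ≤ β) (hr : 0 < r) :
    (fun t : ℝ => (1 + |log t|) ^ β) =O[𝓝[>] 0] (· ^ (-r)) := by
  refine ((isBigO_one_add_abs_log_rpow_atTop hβ hr).comp_tendsto
    tendsto_inv_nhdsGT_zero).congr' ?_ ?_
  · exact .of_forall fun t => by simp only [Function.comp_apply, log_inv, abs_neg]
  · filter_upwards [self_mem_nhdsWithin] with t ht
    rw [Function.comp_apply, inv_rpow ht.out.le, rpow_neg ht.out.le]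

lemma isBigO_one_add_rpow_neg_atTop (hk : 0 ≤ k) :
    (fun t : ℝ => (1 + t) ^ (-k)) =O[atTop] (· ^ (-k)) := by
  refine .of_norm_eventuallyLE ?_
  filter_upwards [eventually_gt_atTop 0] with t ht
  rw [norm_of_nonneg (by positivity)]
  exact rpow_le_rpow_of_nonpos ht (by linarith) (by linarith)

lemma isBigO_one_add_rpow_nhdsGT_zero :
    (fun t : ℝ => (1 + t) ^ k) =O[𝓝[>] 0] (fun _ => (1 : ℝ)) := by
  have : ContinuousAt (fun t : ℝ => (1 + t) ^ k) 0 :=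
    ContinuousAt.rpow_const (by fun_prop) (.inl (by norm_num))
  exact (this.tendsto.mono_left nhdsWithin_le_nhds).isBigO_one ℝ

lemma integrableOn_rpow_mul_one_add_abs_log_rpow_mul (ha : 0 < a) (hk : a < k) (hβ : 0 ≤ β) :
    IntegrableOn (fun t : ℝ => t ^ (a - 1) * ((1 + |log t|) ^ β * (1 + t) ^ (-k))) (Ioi 0) := by
  obtain ⟨c, hac, hck⟩ := exists_between hk
  refine mellin_convergent_of_isBigO_scalar (a := c) (b := a / 2) ?_ ?_ hac ?_ (by linarith)
  · refine ContinuousOn.locallyIntegrableOn (fun t (ht : 0 < t) => ?_) measurableSet_Ioi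
    refine ContinuousAt.continuousWithinAt (.mul (.rpow_const ?_ (.inl (by positivity)))
      (.rpow_const (by fun_prop) (.inl (by positivity))))
    exact continuousAt_const.add (continuousAt_log ht.ne').abs
  · refine ((isBigO_one_add_abs_log_rpow_atTop hβ (sub_pos.2 hck)).mul
      (isBigO_one_add_rpow_neg_atTop (ha.trans hk).le)).congr' .rfl ?_
    filter_upwards [eventually_gt_atTop 0] with t ht
    rw [← rpow_add ht]
    congr 1
    ring
  · simpa only [mul_one] using (isBigO_one_add_abs_log_rpow_nhdsGT_zero hβ (half_pos ha)).mul
      isBigO_one_add_rpow_nhdsGT_zero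

lemma integrableOn_rpow_mul_one_add_rpow_neg (ha : 0 < a) (hk : a < k) :
    IntegrableOn (fun t : ℝ => t ^ (a - 1) * (1 + t) ^ (-k)) (Ioi 0) := by
  simpa only [rpow_zero, one_mul] using
    integrableOn_rpow_mul_one_add_abs_log_rpow_mul ha hk le_rfl

lemma betaPrimeIntegral_pos (ha : 0 < a) (hk : a < k) : 0 < betaPrimeIntegral a k := by
  have integrand_pos : ∀ t ∈ Ioi (0 : ℝ), 0 < t ^ (a - 1) * (1 + t) ^ (-k) := by
    intro t (ht : 0 < t)
    positivity
  rw [betaPrimeIntegral, setIntegral_pos_iff_support_of_nonneg_ae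
    (ae_restrict_of_forall_mem measurableSet_Ioi fun t ht => (integrand_pos t ht).le)
    (integrableOn_rpow_mul_one_add_rpow_neg ha hk),
    inter_eq_right.2 fun t ht => Function.mem_support.2 (integrand_pos t ht).ne', volume_Ioi]
  exact ENNReal.zero_lt_top

lemma hasDerivAt_rpow_mul_one_add_rpow_neg {t : ℝ} (ht : 0 < t) :
    HasDerivAt (fun t : ℝ => t ^ a * (1 + t) ^ (-K))
      (K * (t ^ (a - 1) * (1 + t) ^ (-(K + 1))) - (K - a) * (t ^ (a - 1) * (1 + t) ^ (-K))) t := by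
  have h1t : 0 < 1 + t := by positivity
  refine ((hasDerivAt_rpow_const (.inl ht.ne')).mul
    (((hasDerivAt_id t).const_add 1).rpow_const (.inl h1t.ne'))).congr_deriv ?_
  rw [rpow_sub_one ht.ne', id_eq, neg_add, ← sub_eq_add_neg, rpow_sub_one h1t.ne']
  field_simp
  ring

/-- Since `betaPrimeIntegral a K = B(a, K - a)`, this is `B(a, x + 1) = x / (a + x) * B(a, x)`. -/
lemma sub_mul_betaPrimeIntegral (ha : 0 < a) (hK : a < K) :
    (K - a) * betaPrimeIntegral a K = K * betaPrimeIntegral a (K + 1) := by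
  have int_succ := (integrableOn_rpow_mul_one_add_rpow_neg ha (hK.trans (lt_add_one K))).const_mul K
  have int_self := (integrableOn_rpow_mul_one_add_rpow_neg ha hK).const_mul (K - a)
  have continuous_zero : ContinuousWithinAt (fun t : ℝ => t ^ a * (1 + t) ^ (-K)) (Ici 0) 0 :=
    ContinuousAt.continuousWithinAt ((continuousAt_id.rpow_const (.inr ha.le)).mul
      (.rpow_const (by fun_prop) (.inl (by norm_num))))
  have tendsto_atTop_zero : Tendsto (fun t : ℝ => t ^ a * (1 + t) ^ (-K)) atTop (𝓝 0) := by
    refine ((isBigO_refl _ _).mul (isBigO_one_add_rpow_neg_atTop (ha.trans hK).le)).trans_tendsto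
      ((tendsto_rpow_neg_atTop (sub_pos.2 hK)).congr' ?_)
    filter_upwards [eventually_gt_atTop 0] with t ht
    rw [← rpow_add ht, neg_sub, sub_eq_add_neg]
  have integral_deriv := integral_Ioi_of_hasDerivAt_of_tendsto continuous_zero
    (fun t ht => hasDerivAt_rpow_mul_one_add_rpow_neg ht) (int_succ.sub int_self) tendsto_atTop_zero
  rw [integral_sub int_succ int_self, integral_const_mul, integral_const_mul, zero_rpow ha.ne',
    zero_mul, sub_zero] at integral_deriv
  exact (sub_eq_zero.1 integral_deriv).symm

/-- The substitution `l = exp (-u)` turns this into convergence of the Gamma integral. -/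
lemma integrableOn_rpow_mul_log_one_div_rpow (ha : 0 < a) (hβ : -1 < β) :
    IntegrableOn (fun l : ℝ => l ^ (a - 1) * log (1 / l) ^ β) (Ioo 0 1) := by
  have image_exp_neg : (fun u : ℝ => exp (-u)) '' Ioi 0 = Ioo 0 1 := by
    ext l
    refine ⟨?_, fun hl => ⟨-log l, neg_pos.2 (log_neg hl.1 hl.2), by simp [exp_log hl.1]⟩⟩
    rintro ⟨u, hu, rfl⟩
    exact ⟨exp_pos _, exp_lt_one_iff.2 (neg_lt_zero.2 hu)⟩
  have hasDerivWithinAt_exp_neg : ∀ u ∈ Ioi (0 : ℝ),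
      HasDerivWithinAt (fun u : ℝ => exp (-u)) (-exp (-u)) (Ioi 0) u := fun u _ => by
    simpa using (hasDerivAt_neg u).exp.hasDerivWithinAt
  rw [← image_exp_neg, integrableOn_image_iff_integrableOn_abs_deriv_smul measurableSet_Ioi
    hasDerivWithinAt_exp_neg (exp_injective.comp neg_injective).injOn]
  refine (integrableOn_rpow_mul_exp_neg_mul_rpow hβ one_pos ha).congr_fun (fun u _ => ?_)
    measurableSet_Ioi
  simp only [abs_neg, abs_exp, smul_eq_mul, one_div, log_inv, log_exp, neg_neg, rpow_one,
    ← exp_mul]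
  rw [← mul_assoc, ← exp_add, mul_comm]
  ring_nf

lemma integrableOn_logBetaIntegrand (ha : 0 < a) (hβ : -1 < β) (hw : 0 ≤ w) :
    IntegrableOn (logBetaIntegrand a β k w) (Ioo 0 1) := by
  refine (integrableOn_rpow_mul_log_one_div_rpow ha hβ).mul_continuousOn_of_subset
    (ContinuousOn.rpow_const (by fun_prop) fun l hl => .inl ?_)
    measurableSet_Ioo isCompact_Icc Ioo_subset_Icc_self
  have := mul_nonneg hw hl.1
  positivity

lemma logBetaIntegral_eq_add_mul (ha : 0 < a) (hβ : -1 < β) (hw : 0 ≤ w) :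
    logBetaIntegral a β K w =
      logBetaIntegral a β (K + 1) w + w * logBetaIntegral (a + 1) β (K + 1) w := by
  simp only [logBetaIntegral]
  rw [← integral_const_mul, ← integral_add (integrableOn_logBetaIntegrand ha hβ hw)
    ((integrableOn_logBetaIntegrand (by positivity) hβ hw).const_mul w)]
  refine setIntegral_congr_fun measurableSet_Ioo fun l ⟨hl, _⟩ => ?_
  have h1wl : 0 < 1 + w * l := by positivity
  simp only [logBetaIntegrand]
  rw [add_sub_cancel_right, rpow_sub_one hl.ne', neg_add, ← sub_eq_add_neg, rpow_sub_one h1wl.ne']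
  field_simp

lemma hasDerivAt_rpow_mul_log_rpow_mul_rpow {l : ℝ} (hl : l ∈ Ioo 0 1) (hw : 0 ≤ w) :
    HasDerivAt (fun l : ℝ => l ^ a * log (1 / l) ^ b * (1 + w * l) ^ (-K))
      (a * logBetaIntegrand a b K w l - b * logBetaIntegrand a (b - 1) K w l
        - K * w * logBetaIntegrand (a + 1) b (K + 1) w l) l := by
  have hl0 : 0 < l := hl.1
  have h1wl : 0 < 1 + w * l := by positivity
  have hlog : 0 < log (1 / l) := log_pos ((one_lt_div hl0).2 hl.2)
  have deriv_log : HasDerivAt (fun l : ℝ => log (1 / l)) (-l⁻¹) l := by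
    simpa only [one_div, log_inv] using (hasDerivAt_log hl0.ne').fun_neg
  have deriv_affine : HasDerivAt (fun l : ℝ => 1 + w * l) w l := by
    simpa only [mul_one, id_eq] using ((hasDerivAt_id l).const_mul w).const_add 1
  refine (((hasDerivAt_rpow_const (.inl hl0.ne')).mul (deriv_log.rpow_const
    (.inl hlog.ne'))).mul (deriv_affine.rpow_const (.inl h1wl.ne'))).congr_deriv ?_
  simp only [logBetaIntegrand, Pi.mul_apply]
  rw [add_sub_cancel_right, rpow_sub_one hl0.ne', neg_add, ← sub_eq_add_neg]
  field_simp
  ring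

lemma tendsto_rpow_mul_log_rpow_mul_rpow_nhdsGT_zero (ha : 0 < a) :
    Tendsto (fun l : ℝ => l ^ a * log (1 / l) ^ b * (1 + w * l) ^ (-K)) (𝓝[>] 0) (𝓝 0) := by
  have log_factor : Tendsto (fun l : ℝ => l ^ a * log (1 / l) ^ b) (𝓝[>] 0) (𝓝 0) := by
    refine (isLittleO_abs_log_rpow_rpow_nhdsGT_zero b (neg_lt_zero.2 ha)).tendsto_div_nhds_zero
      |>.congr' ?_
    filter_upwards [Ioo_mem_nhdsGT one_pos] with l hl
    rw [abs_of_neg (log_neg hl.1 hl.2), rpow_neg hl.1.le, div_inv_eq_mul, one_div, log_inv,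
      mul_comm]
  have affine_factor : ContinuousAt (fun l : ℝ => (1 + w * l) ^ (-K)) 0 :=
    .rpow_const (by fun_prop) (.inl (by simp))
  simpa only [zero_mul] using log_factor.mul (affine_factor.tendsto.mono_left nhdsWithin_le_nhds)

lemma tendsto_rpow_mul_log_rpow_mul_rpow_nhdsLT_one (hb : 0 < b) (hw : 0 ≤ w) :
    Tendsto (fun l : ℝ => l ^ a * log (1 / l) ^ b * (1 + w * l) ^ (-K)) (𝓝[<] 1) (𝓝 0) := by
  have : ContinuousAt (fun l : ℝ => l ^ a * log (1 / l) ^ b * (1 + w * l) ^ (-K)) 1 := by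
    refine .mul (.mul (continuousAt_id.rpow_const (.inl one_ne_zero)) (.rpow_const ?_ (.inr hb.le)))
      (.rpow_const (by fun_prop) (.inl (by positivity)))
    exact (continuousAt_const.div continuousAt_id one_ne_zero).log (by norm_num)
  simpa [zero_rpow hb.ne'] using this.tendsto.mono_left nhdsWithin_le_nhds

lemma logBetaIntegral_integral_by_parts (ha : 0 < a) (hb : 0 < b) (hw : 0 ≤ w) :
    a * logBetaIntegral a b K w - b * logBetaIntegral a (b - 1) K w
      = K * w * logBetaIntegral (a + 1) b (K + 1) w := by
  have int_a := (integrableOn_logBetaIntegrand (k := K) ha (by linarith : -1 < b) hw).const_mul a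
  have int_b :=
    (integrableOn_logBetaIntegrand (k := K) ha (by linarith : -1 < b - 1) hw).const_mul b
  have int_K := (integrableOn_logBetaIntegrand (k := K + 1) (add_pos ha one_pos)
    (by linarith : -1 < b) hw).const_mul (K * w)
  have integral_deriv := intervalIntegral.integral_eq_sub_of_hasDerivAt_of_tendsto one_pos
    (fun l hl => hasDerivAt_rpow_mul_log_rpow_mul_rpow hl hw)
    ((intervalIntegrable_iff_integrableOn_Ioo_of_le zero_le_one).2 ((int_a.sub' int_b).sub int_K))
    (tendsto_rpow_mul_log_rpow_mul_rpow_nhdsGT_zero ha)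
    (tendsto_rpow_mul_log_rpow_mul_rpow_nhdsLT_one hb hw)
  rw [intervalIntegral.integral_of_le zero_le_one, integral_Ioc_eq_integral_Ioo,
    integral_sub (int_a.sub' int_b) int_K, integral_sub int_a int_b, integral_const_mul,
    integral_const_mul, integral_const_mul, sub_zero] at integral_deriv
  exact sub_eq_zero.1 integral_deriv

lemma div_sub_mul_logBetaIntegral_div (ha : 0 < a) (hK : K ≠ a) (hb : 0 < b) (hw : 0 ≤ w)
    (hJ : logBetaIntegral a b (K + 1) w ≠ 0) :
    a / (K - a) - w * (logBetaIntegral (a + 1) b (K + 1) w / logBetaIntegral a b (K + 1) w)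
      = b / (K - a) * (logBetaIntegral a (b - 1) K w / logBetaIntegral a b (K + 1) w) := by
  have by_parts := logBetaIntegral_integral_by_parts (K := K) ha hb hw
  rw [logBetaIntegral_eq_add_mul ha (by linarith) hw] at by_parts
  have hKa : K - a ≠ 0 := sub_ne_zero.2 hK
  field_simp
  linear_combination by_parts

lemma rpow_div_log_rpow_mul_logBetaIntegral (hw : 1 < w) :
    w ^ a / log w ^ β * logBetaIntegral a β k w =
      ∫ t in Ioo 0 w, (1 - log t / log w) ^ β * (t ^ (a - 1) * (1 + t) ^ (-k)) := by
  have hw0 : 0 < w := one_pos.trans hw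
  have hlog : 0 < log w := log_pos hw
  have substitution := intervalIntegral.mul_integral_comp_mul_left (a := 0) (b := 1) (c := w)
    (f := fun t => (1 - log t / log w) ^ β * (t ^ (a - 1) * (1 + t) ^ (-k)))
  rw [mul_zero, mul_one, intervalIntegral.integral_of_le zero_le_one,
    intervalIntegral.integral_of_le hw0.le, integral_Ioc_eq_integral_Ioo,
    integral_Ioc_eq_integral_Ioo] at substitution
  rw [← substitution, logBetaIntegral, ← integral_const_mul, ← integral_const_mul]
  refine setIntegral_congr_fun measurableSet_Ioo fun l ⟨hl0, hl1⟩ => ?_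
  have log_ratio : 1 - log (w * l) / log w = log (1 / l) / log w := by
    rw [log_mul hw0.ne' hl0.ne', one_div, log_inv]
    field_simp
    ring
  have hlog_inv : 0 ≤ log (1 / l) := log_nonneg ((one_le_div hl0).2 hl1.le)
  simp only [logBetaIntegrand]
  rw [log_ratio, div_rpow hlog_inv hlog.le, mul_rpow hw0.le hl0.le, rpow_sub_one hw0.ne' a]
  field_simp

lemma abs_one_sub_log_div_log_rpow_le {t : ℝ} (hβ : 0 ≤ β) (hw : exp 1 ≤ w) (ht : t ∈ Ioo 0 w) :
    |(1 - log t / log w) ^ β| ≤ (1 + |log t|) ^ β := by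
  have hlog : 1 ≤ log w := (le_log_iff_exp_le ((exp_pos 1).trans_le hw)).2 hw
  have ratio_le_one : log t / log w ≤ 1 :=
    div_le_one_of_le₀ (log_le_log ht.1 ht.2.le) (by positivity)
  have neg_ratio_le : -(log t / log w) ≤ |log t| := calc
    -(log t / log w) ≤ |log t / log w| := neg_le_abs _
    _ = |log t| / log w := by rw [abs_div, abs_of_pos (by positivity : 0 < log w)]
    _ ≤ |log t| := div_le_self (abs_nonneg _) hlog
  rw [abs_of_nonneg (rpow_nonneg (by linarith) β)]
  exact rpow_le_rpow (by linarith) (by linarith) hβ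

lemma tendsto_one_sub_log_div_log_rpow (hβ : 0 ≤ β) (t : ℝ) :
    Tendsto (fun w : ℝ => (1 - log t / log w) ^ β) atTop (𝓝 1) := by
  simpa only [sub_zero, one_rpow] using
    ((tendsto_log_atTop.const_div_atTop (log t)).const_sub 1).rpow_const (.inr hβ)

theorem tendsto_rpow_div_log_rpow_mul_logBetaIntegral (ha : 0 < a) (hk : a < k) (hβ : 0 ≤ β) :
    Tendsto (fun w => w ^ a / log w ^ β * logBetaIntegral a β k w) atTop
      (𝓝 (betaPrimeIntegral a k)) := by
  set F : ℝ → ℝ → ℝ := fun w t => (1 - log t / log w) ^ β * (t ^ (a - 1) * (1 + t) ^ (-k)) with hF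
  have integral_indicator : ∀ᶠ w in atTop, ∫ t in Ioi 0, (Iio w).indicator (F w) t =
      w ^ a / log w ^ β * logBetaIntegral a β k w := by
    filter_upwards [eventually_gt_atTop 1] with w hw
    rw [setIntegral_indicator measurableSet_Iio, Ioi_inter_Iio,
      rpow_div_log_rpow_mul_logBetaIntegral hw]
  refine Tendsto.congr' integral_indicator (tendsto_integral_filter_of_dominated_convergence
    (fun t => t ^ (a - 1) * ((1 + |log t|) ^ β * (1 + t) ^ (-k))) ?measurable ?bound
    (integrableOn_rpow_mul_one_add_abs_log_rpow_mul ha hk hβ) ?limit)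
  case measurable =>
    exact .of_forall fun w => Measurable.aestronglyMeasurable
      (.indicator (by fun_prop) measurableSet_Iio)
  case bound =>
    filter_upwards [eventually_ge_atTop (exp 1)] with w hw
    refine ae_restrict_of_forall_mem measurableSet_Ioi fun t (ht : 0 < t) => ?_
    rcases lt_or_ge t w with htw | hwt
    · rw [indicator_of_mem (mem_Iio.2 htw), hF, norm_mul, mul_left_comm (t ^ (a - 1)),
        norm_of_nonneg (by positivity : 0 ≤ t ^ (a - 1) * (1 + t) ^ (-k))]
      gcongr
      exact abs_one_sub_log_div_log_rpow_le hβ hw ⟨ht, htw⟩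
    · rw [indicator_of_notMem (notMem_Iio.2 hwt), norm_zero]
      positivity
  case limit =>
    refine ae_restrict_of_forall_mem measurableSet_Ioi fun t _ => ?_
    have pointwise := (tendsto_one_sub_log_div_log_rpow hβ t).mul_const
      (t ^ (a - 1) * (1 + t) ^ (-k))
    rw [one_mul] at pointwise
    refine pointwise.congr' ?_
    filter_upwards [eventually_gt_atTop t] with w htw
    rw [indicator_of_mem (mem_Iio.2 htw)]

theorem tendsto_log_mul_logBetaIntegral_div (ha : 0 < a) (hK : a < K) (hb : 1 ≤ b) :
    Tendsto (fun w => log w * (logBetaIntegral a (b - 1) K w / logBetaIntegral a b (K + 1) w))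
      atTop (𝓝 (K / (K - a))) := by
  have hB : betaPrimeIntegral a (K + 1) ≠ 0 := (betaPrimeIntegral_pos ha (by linarith)).ne'
  have beta_quotient : betaPrimeIntegral a K / betaPrimeIntegral a (K + 1) = K / (K - a) := by
    rw [div_eq_div_iff hB (sub_pos.2 hK).ne', mul_comm, sub_mul_betaPrimeIntegral ha hK]
  rw [← beta_quotient]
  refine ((tendsto_rpow_div_log_rpow_mul_logBetaIntegral ha hK (sub_nonneg.2 hb)).div
    (tendsto_rpow_div_log_rpow_mul_logBetaIntegral ha (hK.trans (lt_add_one K))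
      (zero_le_one.trans hb)) hB).congr' ?_
  filter_upwards [eventually_gt_atTop 1] with w hw
  have hwa : w ^ a ≠ 0 := (rpow_pos_of_pos (one_pos.trans hw) a).ne'
  have hlog : 0 < log w := log_pos hw
  rw [Pi.div_apply, mul_div_mul_comm, rpow_sub_one hlog.ne', div_div_div_cancel_left' _ _ hwa,
    div_div_cancel₀ (rpow_pos_of_pos hlog b).ne']

theorem tendsto_log_mul_div_sub_logBetaIntegral_div (ha : 0 < a) (hK : a < K) (hb : 1 ≤ b) :
    Tendsto (fun w => log w * (a / (K - a) -
        w * (logBetaIntegral (a + 1) b (K + 1) w / logBetaIntegral a b (K + 1) w)))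
      atTop (𝓝 (b / (K - a) * (K / (K - a)))) := by
  have denominator_ne_zero : ∀ᶠ w in atTop, logBetaIntegral a b (K + 1) w ≠ 0 :=
    ((tendsto_rpow_div_log_rpow_mul_logBetaIntegral ha (by linarith) (by linarith)).eventually_ne
      (betaPrimeIntegral_pos ha (by linarith)).ne').mono fun _ => right_ne_zero_of_mul
  refine ((tendsto_log_mul_logBetaIntegral_div ha hK hb).const_mul (b / (K - a))).congr' ?_
  filter_upwards [denominator_ne_zero, eventually_ge_atTop 0] with w hJ hw
  rw [div_sub_mul_logBetaIntegral_div ha hK.ne' (by linarith) hw hJ, mul_left_comm]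

end

theorem stmt7_general (p n : ℝ) (hp : 2 < p) (hn : -2 < n) (b : ℝ) (hb : 1 ≤ b)
    (φ : ℝ → ℝ)
    (hφ : ∀ w > (0 : ℝ), φ w = w *
      ((∫ l in Set.Ioo (0 : ℝ) 1,
          l ^ (p / 2 - 1) * Real.log (1 / l) ^ b * (1 + w * l) ^ (-(p + n) / 2 - 1)) /
        (∫ l in Set.Ioo (0 : ℝ) 1,
          l ^ (p / 2 - 2) * Real.log (1 / l) ^ b * (1 + w * l) ^ (-(p + n) / 2 - 1)))) :
    Tendsto (fun w : ℝ => Real.log w * ((p - 2) / (n + 2) - φ w))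
      atTop (nhds (2 * b * (p + n) / (n + 2) ^ 2)) := by
  have hn2 : n + 2 ≠ 0 := by linarith
  have gap : (p + n) / 2 - (p / 2 - 1) = (n + 2) / 2 := by ring
  have limit_eq : b / ((n + 2) / 2) * ((p + n) / 2 / ((n + 2) / 2))
      = 2 * b * (p + n) / (n + 2) ^ 2 := by
    field_simp
  have center_eq : (p / 2 - 1) / ((n + 2) / 2) = (p - 2) / (n + 2) := by
    field_simp
  have limit := tendsto_log_mul_div_sub_logBetaIntegral_div (a := p / 2 - 1) (K := (p + n) / 2)
    (by linarith) (by linarith) hb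
  rw [gap, limit_eq, center_eq] at limit
  refine limit.congr' ?_
  filter_upwards [eventually_gt_atTop 0] with w hw
  simp only [hφ w hw, logBetaIntegral, logBetaIntegrand]
  ring_nf

/-- For p ≥ 3, n ≥ 3 and b ≥ 1, the unknown-variance shrinkage function φ satisfies
lim_{w→∞} (log w)·((p−2)/(n+2) − φ(w)) = 2b(p+n)/(n+2)². -/
theorem stmt7 (p n : ℝ) (hp : 3 ≤ p) (hn : 3 ≤ n) (b : ℝ) (hb : 1 ≤ b)
    (φ : ℝ → ℝ)
    (hφ : ∀ w > (0 : ℝ), φ w = w *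
      ((∫ l in Set.Ioo (0 : ℝ) 1,
          l ^ (p / 2 - 1) * Real.log (1 / l) ^ b * (1 + w * l) ^ (-(p + n) / 2 - 1)) /
        (∫ l in Set.Ioo (0 : ℝ) 1,
          l ^ (p / 2 - 2) * Real.log (1 / l) ^ b * (1 + w * l) ^ (-(p + n) / 2 - 1)))) :
    Tendsto (fun w : ℝ => Real.log w * ((p - 2) / (n + 2) - φ w))
      atTop (nhds (2 * b * (p + n) / (n + 2) ^ 2)) :=
  stmt7_general p n (by linarith) (by linarith) b hb φ hφ
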